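/- Let G be a graph, C a circuit in G such that every edge of C is contained in a thread of G of length at least q. If the contracted graph G/C admits a nowhere-zero Z2×Z2-flow, then G admits a Z2×Z2-flow f such that E(G) − E(C) ⊆ supp(f) and |E_{f=(0,0)}(C)| ≤ (1/4)(|E(C)| − q). -/

import Mathlib

/-- A finite multigraph: loops and multiple edges are allowed.  Each edge is
assigned its (unordered) pair of endpoints. -/
structure Multigraph where
  V : Type
  E : Type
  finV : Finite V
  finE : Finite E
  ends : E → Sym2 V

attribute [instance] Multigraph.finV Multigraph.finE

namespace Multigraph

/-- A walk of length `n`: a sequence of `n+1` vertices and `n` edges, each edge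
joining consecutive vertices. -/
structure Walk (G : Multigraph) (n : ℕ) where
  vtx : Fin (n + 1) → G.V
  edge : Fin n → G.E
  compat : ∀ i : Fin n, G.ends (edge i) = s(vtx i.castSucc, vtx i.succ)

variable (G : Multigraph)

/-- The degree of a vertex (a loop counts twice). -/
noncomputable def degree (v : G.V) : ℕ :=
  Nat.card {e : G.E // v ∈ G.ends e ∧ ¬ (G.ends e).IsDiag} +
    2 * Nat.card {e : G.E // G.ends e = s(v, v)}

/-- The degree of a vertex in the subgraph with edge set `S` (a loop counts twice). -/
noncomputable def degIn (S : Set G.E) (v : G.V) : ℕ :=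
  Nat.card {e : G.E // e ∈ S ∧ v ∈ G.ends e ∧ ¬ (G.ends e).IsDiag} +
    2 * Nat.card {e : G.E // e ∈ S ∧ G.ends e = s(v, v)}

/-- A cycle (identified with its edge set): every vertex has even degree. -/
def IsCycle (S : Set G.E) : Prop := ∀ v : G.V, Even (G.degIn S v)

/-- `u` is joined to `w` by a path using only edges in `S`. -/
def Reaches (S : Set G.E) (u w : G.V) : Prop :=
  Relation.ReflTransGen (fun a b => ∃ e ∈ S, G.ends e = s(a, b)) u w

/-- A circuit (identified with its edge set): a connected `2`-regular subgraph. -/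
def IsCircuit (S : Set G.E) : Prop :=
  S.Nonempty ∧
    (∀ v : G.V, (∃ e ∈ S, v ∈ G.ends e) → G.degIn S v = 2) ∧
    ∀ u w : G.V, (∃ e ∈ S, u ∈ G.ends e) → (∃ e ∈ S, w ∈ G.ends e) → G.Reaches S u w

/-- A `ℤ₂×ℤ₂`-flow: at every vertex the values on the incident edges sum to zero
(a loop contributes its value twice, hence zero). -/
def IsFlow (f : G.E → ZMod 2 × ZMod 2) : Prop :=
  ∀ v : G.V, ∑ᶠ e ∈ {e : G.E | v ∈ G.ends e ∧ ¬ (G.ends e).IsDiag}, f e = 0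

/-- The support of a flow. -/
def supp (f : G.E → ZMod 2 × ZMod 2) : Set G.E := {e | f e ≠ 0}

/-- Contraction of the edge set `C`: delete the edges of `C` and identify the
ends of each edge of `C`. -/
def contract (C : Set G.E) : Multigraph where
  V := Quot fun u w : G.V => ∃ e ∈ C, G.ends e = s(u, w)
  E := {e : G.E // e ∉ C}
  finV := Finite.of_surjective _ (Quot.mk_surjective)
  finE := inferInstance
  ends := fun e => (G.ends e.1).map (Quot.mk _)

/-- A path: all vertices distinct (hence all edges distinct, which we also require). -/
def Walk.IsPath {n : ℕ} (W : G.Walk n) : Prop :=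
  Function.Injective W.vtx ∧ Function.Injective W.edge

/-- A nontrivial path all of whose internal vertices have degree `2` in `G`. -/
def IsDeg2Path {n : ℕ} (W : G.Walk n) : Prop :=
  1 ≤ n ∧ W.IsPath G ∧ ∀ i : Fin (n + 1), 0 < i.val → i.val < n → G.degree (W.vtx i) = 2

/-- A thread of `G`: a maximal path all of whose internal vertices have degree `2`
in `G` (maximal: its edge set is not properly contained in the edge set of
another such path). -/
def IsThread {n : ℕ} (W : G.Walk n) : Prop :=
  G.IsDeg2Path W ∧ ∀ (m : ℕ) (Q : G.Walk m), G.IsDeg2Path Q →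
    Set.range W.edge ⊆ Set.range Q.edge → Set.range Q.edge = Set.range W.edge

/-- A cycle cover: a (multi)collection of cycles covering every edge. -/
def IsCycleCover (𝒞 : Multiset (Set G.E)) : Prop :=
  (∀ S ∈ 𝒞, G.IsCycle S) ∧ ∀ e : G.E, ∃ S ∈ 𝒞, e ∈ S

/-- The length of a cycle cover: the sum of the lengths of its cycles. -/
noncomputable def coverLength (𝒞 : Multiset (Set G.E)) : ℕ :=
  (𝒞.map Set.ncard).sum

/-- The minimum length of a cycle cover of `G`. -/
noncomputable def cc : ℕ :=
  sInf {L : ℕ | ∃ 𝒞 : Multiset (Set G.E), G.IsCycleCover 𝒞 ∧ G.coverLength 𝒞 = L}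

/-- `G` is bridgeless: the ends of each edge `e` are still joined after deleting `e`. -/
def Bridgeless : Prop :=
  ∀ (e : G.E) (u w : G.V), G.ends e = s(u, w) → G.Reaches {e}ᶜ u w

/-- The connected component of the subgraph with edge set `S` containing the edge `e₀`. -/
def component (S : Set G.E) (e₀ : G.E) : Set G.E :=
  {e ∈ S | ∃ u w : G.V, u ∈ G.ends e₀ ∧ w ∈ G.ends e ∧ G.Reaches S u w}

/-- `B` is a connected component of the subgraph with edge set `S`. -/
def IsComponent (S B : Set G.E) : Prop := ∃ e₀ ∈ S, B = G.component S e₀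

/-- A `k`-flow: an orientation `D` (given by the tail/head pair of each edge)
together with an integer-valued function `f` with `|f e| < k`, conserved at
every vertex. -/
def IsIntFlow (k : ℕ) (D : G.E → G.V × G.V) (f : G.E → ℤ) : Prop :=
  (∀ e : G.E, s((D e).1, (D e).2) = G.ends e) ∧
    (∀ e : G.E, |f e| < (k : ℤ)) ∧
    ∀ v : G.V, (∑ᶠ e ∈ {e : G.E | (D e).1 = v}, f e) =
      ∑ᶠ e ∈ {e : G.E | (D e).2 = v}, f e

end Multigraph

namespace Multigraph

section Boundary

open scoped Classical

variable {G : Multigraph}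

noncomputable instance fintypeVertices : Fintype G.V := Fintype.ofFinite _

noncomputable instance fintypeEdges : Fintype G.E := Fintype.ofFinite _

/-- The incidence of a vertex and an edge over `ZMod 2`; loops have incidence zero. -/
noncomputable def inc (v : G.V) (e : G.E) : ZMod 2 :=
  if v ∈ G.ends e ∧ ¬ (G.ends e).IsDiag then 1 else 0

/-- The boundary at `v` of an edge function with values in a `ZMod 2`-module. -/
noncomputable def bd {A : Type*} [AddCommGroup A] [Module (ZMod 2) A] (f : G.E → A) (v : G.V) : A :=
  ∑ e, inc v e • f e

theorem inc_eq_of_ends {e : G.E} {a b : G.V} (h : G.ends e = s(a, b)) (v : G.V) :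
    inc v e = (if v = a then 1 else 0) + (if v = b then 1 else 0) := by
  unfold inc
  rw [h]
  by_cases hab : a = b
  · subst hab
    by_cases hva : v = a <;> simp [hva]
    decide
  · by_cases hva : v = a
    · subst hva; simp [hab]
    · by_cases hvb : v = b <;> simp [hva, hvb, hab, Ne.symm hab]

variable {A : Type*} [AddCommGroup A] [Module (ZMod 2) A]

theorem bd_add (f g : G.E → A) (v : G.V) : bd (f + g) v = bd f v + bd g v := by
  simp [bd, smul_add, Finset.sum_add_distrib]

theorem bd_smul_const (P : G.E → ZMod 2) (c : A) (v : G.V) :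
    bd (fun e => P e • c) v = bd P v • c := by
  simp [bd, Finset.sum_smul, mul_smul]

theorem bd_sum {ι : Type*} (s : Finset ι) (F : ι → G.E → A) (v : G.V) :
    bd (fun e => ∑ i ∈ s, F i e) v = ∑ i ∈ s, bd (F i) v := by
  simp only [bd, Finset.smul_sum]
  exact Finset.sum_comm

theorem bd_single {e : G.E} {a b : G.V} (h : G.ends e = s(a, b)) (c : A) (v : G.V) :
    bd (Pi.single e c) v = ((if v = a then 1 else 0) + (if v = b then 1 else 0) : ZMod 2) • c := by
  rw [← inc_eq_of_ends h, bd, Finset.sum_eq_single e]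
  · simp
  · intro e' _ he'
    simp [he']
  · simp

theorem isFlow_iff_bd (f : G.E → ZMod 2 × ZMod 2) : G.IsFlow f ↔ ∀ v, bd f v = 0 := by
  refine forall_congr' fun v => ?_
  rw [finsum_mem_eq_finite_toFinset_sum _ (Set.toFinite _), bd]
  rw [show (∑ e, inc v e • f e) =
    ∑ e ∈ (Set.toFinite {e : G.E | v ∈ G.ends e ∧ ¬ (G.ends e).IsDiag}).toFinset, f e by
      rw [← Finset.sum_subset (Finset.subset_univ _)]
      · refine Finset.sum_congr rfl fun e he => ?_
        rw [Set.Finite.mem_toFinset] at he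
        simp [inc, if_pos (show v ∈ G.ends e ∧ ¬ (G.ends e).IsDiag from he)]
      · intro e _ he
        rw [Set.Finite.mem_toFinset] at he
        rw [inc, if_neg (show ¬ (v ∈ G.ends e ∧ ¬ (G.ends e).IsDiag) from he), zero_smul]]

/-- Vertices joined by `S`-edges are the boundary of a chain supported on `S`. -/
theorem Reaches.exists_bd_eq {S : Set G.E} {u w : G.V} (h : G.Reaches S u w) :
    ∃ P : G.E → ZMod 2, (∀ e, P e ≠ 0 → e ∈ S) ∧
      ∀ x, bd P x = (if x = u then 1 else 0) + (if x = w then 1 else 0) := by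
  induction h with
  | refl =>
    refine ⟨0, by simp, fun x => ?_⟩
    simp [bd, CharTwo.add_self_eq_zero]
  | @tail b d _ hbd ih =>
    obtain ⟨P, hP, hbP⟩ := ih
    obtain ⟨e, he, hends⟩ := hbd
    refine ⟨P + Pi.single e 1, fun e' h' => ?_, fun x => ?_⟩
    · by_cases hee : e' = e
      · exact hee ▸ he
      · exact hP e' (by simpa [hee] using h')
    · rw [bd_add, hbP, bd_single hends]
      have := CharTwo.add_self_eq_zero (if x = b then 1 else 0 : ZMod 2)
      simp only [smul_eq_mul, mul_one]
      linear_combination this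

/-- Handshake lemma: a vertex of odd degree is joined to another one. -/
theorem exists_odd_reaches {P : G.E → ZMod 2} {u : G.V} (hu : bd P u ≠ 0) :
    ∃ w, w ≠ u ∧ bd P w ≠ 0 ∧ G.Reaches {e | P e ≠ 0} u w := by
  by_contra! hcon
  set S : Set G.E := {e | P e ≠ 0}
  have hsum : ∑ v with G.Reaches S u v, bd P v = 0 := by
    simp only [bd]
    rw [Finset.sum_comm]
    refine Finset.sum_eq_zero fun e _ => ?_
    rw [← Finset.sum_smul]
    by_cases he : P e = 0
    · simp [he]
    · obtain ⟨a, b, hab⟩ : ∃ a b, G.ends e = s(a, b) :=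
        ⟨_, _, (Quot.out_eq (G.ends e)).symm⟩
      have hiff : G.Reaches S u a ↔ G.Reaches S u b :=
        ⟨fun h => h.tail ⟨e, he, hab⟩, fun h => h.tail ⟨e, he, hab.trans Sym2.eq_swap⟩⟩
      have : ∑ v with G.Reaches S u v, inc v e = 0 := by
        simp only [inc_eq_of_ends hab, Finset.sum_add_distrib, Finset.sum_ite_eq',
          Finset.mem_filter, Finset.mem_univ, true_and, hiff]
        exact CharTwo.add_self_eq_zero _
      rw [this, zero_smul]
  rw [Finset.sum_eq_single u] at hsum
  · exact hu hsum
  · intro v hv hvu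
    by_contra h
    exact hcon v hvu h (by simpa using hv)
  · intro h
    exact absurd (Finset.mem_filter.2 ⟨Finset.mem_univ _, Relation.ReflTransGen.refl⟩) h

end Boundary

end Multigraph

namespace Multigraph

section Switching

open scoped Classical

variable {G : Multigraph} {C : Set G.E}

/-- The symplectic form on `ℤ₂×ℤ₂`; for `c ≠ 0` its kernel in `x` is `{0, c}`. -/
def symp (c x : ZMod 2 × ZMod 2) : ZMod 2 := c.1 * x.2 + c.2 * x.1

theorem symp_ne_zero_iff {c : ZMod 2 × ZMod 2} (hc : c ≠ 0) (x : ZMod 2 × ZMod 2) :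
    symp c x ≠ 0 ↔ x ≠ 0 ∧ x ≠ c := by
  revert c x; decide

theorem add_ne_zero_of_symp_ne_zero {c x : ZMod 2 × ZMod 2} (h : symp c x ≠ 0) : x + c ≠ 0 := by
  revert c x; decide

theorem symp_add (c x y : ZMod 2 × ZMod 2) : symp c (x + y) = symp c x + symp c y := by
  simp [symp]; ring

theorem symp_smul (c : ZMod 2 × ZMod 2) (r : ZMod 2) (x : ZMod 2 × ZMod 2) :
    symp c (r • x) = r * symp c x := by
  simp [symp]; ring

theorem symp_self (c : ZMod 2 × ZMod 2) : symp c c = 0 := by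
  revert c; decide

theorem zmod_two_eq_one {x : ZMod 2} (h : x ≠ 0) : x = 1 := by
  revert x; decide

theorem add_eq_iff_eq_add (x c t : ZMod 2 × ZMod 2) : x + c = t ↔ x = t + c := by
  revert x c t; decide

theorem add_add_cancel_char_two (x c : ZMod 2 × ZMod 2) : x + c + c = x := by
  revert x c; decide

/-- Flows of `G` that vanish only on `C`. -/
def Admissible (C : Set G.E) (f : G.E → ZMod 2 × ZMod 2) : Prop :=
  (∀ v, bd f v = 0) ∧ ∀ e ∉ C, f e ≠ 0

/-- Cycles `Q` such that adding `c` along `Q` keeps `f` nonzero outside `C`. -/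
def Switchable (C : Set G.E) (f : G.E → ZMod 2 × ZMod 2) (c : ZMod 2 × ZMod 2)
    (Q : G.E → ZMod 2) : Prop :=
  (∀ v, bd Q v = 0) ∧ ∀ e ∉ C, Q e ≠ 0 → symp c (f e) ≠ 0

/-- Add `c` to `f` along `Q`. -/
def switch (f : G.E → ZMod 2 × ZMod 2) (c : ZMod 2 × ZMod 2) (Q : G.E → ZMod 2) :
    G.E → ZMod 2 × ZMod 2 := f + fun e => Q e • c

theorem switch_apply_of_ne {f : G.E → ZMod 2 × ZMod 2} {Q : G.E → ZMod 2} {e : G.E} (h : Q e ≠ 0)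
    (c : ZMod 2 × ZMod 2) : switch f c Q e = f e + c := by
  simp [switch, zmod_two_eq_one h]

theorem switch_apply_of_eq {f : G.E → ZMod 2 × ZMod 2} {Q : G.E → ZMod 2} {e : G.E} (h : Q e = 0)
    (c : ZMod 2 × ZMod 2) : switch f c Q e = f e := by
  simp [switch, h]

theorem symp_switch (f : G.E → ZMod 2 × ZMod 2) (c : ZMod 2 × ZMod 2) (Q : G.E → ZMod 2)
    (e : G.E) : symp c (switch f c Q e) = symp c (f e) := by
  simp only [switch, Pi.add_apply, symp_add, symp_smul, symp_self, mul_zero, add_zero]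

theorem Admissible.switch {f : G.E → ZMod 2 × ZMod 2} {c : ZMod 2 × ZMod 2} {Q : G.E → ZMod 2}
    (hf : Admissible C f) (hQ : Switchable C f c Q) : Admissible C (switch f c Q) := by
  refine ⟨fun v => ?_, fun e he => ?_⟩
  · rw [Multigraph.switch, bd_add, hf.1, bd_smul_const, hQ.1]; simp
  · by_cases h : Q e = 0
    · rw [switch_apply_of_eq h]; exact hf.2 e he
    · rw [switch_apply_of_ne h]; exact add_ne_zero_of_symp_ne_zero (hQ.2 e he h)

/-- The number of edges of `C` with value `t`. -/
noncomputable def valueCount (C : Set G.E) (f : G.E → ZMod 2 × ZMod 2) (t : ZMod 2 × ZMod 2) : ℕ :=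
  Finset.card {e | e ∈ C ∧ f e = t}

theorem sum_valueCount (f : G.E → ZMod 2 × ZMod 2) :
    ∑ t, valueCount C f t = C.ncard := by
  rw [Set.ncard_eq_toFinset_card', Finset.card_eq_sum_card_fiberwise (f := f) (t := Finset.univ)
    (fun _ _ => Finset.mem_coe.2 (Finset.mem_univ _))]
  refine Finset.sum_congr rfl fun t _ => ?_
  rw [valueCount]
  congr 1
  ext e; simp

theorem valueCount_eq_add (f : G.E → ZMod 2 × ZMod 2) (t : ZMod 2 × ZMod 2) (Q : G.E → ZMod 2) :
    valueCount C f t = Finset.card {e | e ∈ C ∧ Q e ≠ 0 ∧ f e = t} +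
      Finset.card {e | e ∈ C ∧ Q e = 0 ∧ f e = t} := by
  rw [valueCount, ← Finset.card_filter_add_card_filter_not (fun e => Q e ≠ 0),
    Finset.filter_filter, Finset.filter_filter]
  congr 2 <;> ext e <;> simp <;> tauto

/-- Every admissible flow has more than `(|C| - q)/4` zeros on `C`. -/
def ManyZeros (C : Set G.E) (q : ℕ) : Prop :=
  ∀ f, Admissible C f → C.ncard < 4 * valueCount C f 0 + q

/-- The chain `C` is a cycle. -/
def IsCycleChain (C : Set G.E) : Prop := ∀ v, bd (fun e => if e ∈ C then (1 : ZMod 2) else 0) v = 0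

variable {q : ℕ} {f : G.E → ZMod 2 × ZMod 2} {c : ZMod 2 × ZMod 2}

theorem ManyZeros.lt_valueCount (hbad : ManyZeros C q) (hC : IsCycleChain C)
    (hf : Admissible C f) (t : ZMod 2 × ZMod 2) : C.ncard < 4 * valueCount C f t + q := by
  have hs : Switchable C f t (fun e => if e ∈ C then (1 : ZMod 2) else 0) :=
    ⟨hC, fun e he h => by simp [he] at h⟩
  have := hbad _ (hf.switch hs)
  convert this using 3
  unfold valueCount
  congr 1
  ext e
  simp only [Finset.mem_filter, Finset.mem_univ, true_and]
  refine and_congr_right fun he => ?_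
  rw [switch_apply_of_ne (by simp [he]), add_eq_iff_eq_add, zero_add]

theorem ManyZeros.card_lt (hbad : ManyZeros C q) (hC : IsCycleChain C)
    (hf : Admissible C f) {Q : G.E → ZMod 2} (hQ : Switchable C f c Q) (t : ZMod 2 × ZMod 2) :
    Finset.card {e | e ∈ C ∧ Q e ≠ 0 ∧ f e = t} <
      q + Finset.card {e | e ∈ C ∧ Q e ≠ 0 ∧ f e = t + c} := by
  have h1 := hbad.lt_valueCount hC (hf.switch hQ) t
  have e1 := valueCount_eq_add (C := C) (switch f c Q) t Q
  have e2 := valueCount_eq_add (C := C) f t Q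
  have e3 : Finset.card {e | e ∈ C ∧ Q e ≠ 0 ∧ switch f c Q e = t} =
      Finset.card {e | e ∈ C ∧ Q e ≠ 0 ∧ f e = t + c} := by
    congr 1
    ext e
    simp only [Finset.mem_filter, Finset.mem_univ, true_and]
    refine and_congr_right fun _ => and_congr_right fun h => ?_
    rw [switch_apply_of_ne h, add_eq_iff_eq_add]
  have e4 : Finset.card {e | e ∈ C ∧ Q e = 0 ∧ switch f c Q e = t} =
      Finset.card {e | e ∈ C ∧ Q e = 0 ∧ f e = t} := by
    congr 1
    ext e
    simp only [Finset.mem_filter, Finset.mem_univ, true_and]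
    refine and_congr_right fun _ => and_congr_right fun h => ?_
    rw [switch_apply_of_eq h]
  have hsum := sum_valueCount (C := C) f
  rw [← Finset.add_sum_erase _ _ (Finset.mem_univ t)] at hsum
  have h3 : ∑ s ∈ Finset.univ.erase t, C.ncard ≤
      ∑ s ∈ Finset.univ.erase t, (4 * valueCount C f s + q) :=
    Finset.sum_le_sum fun s _ => (hbad.lt_valueCount hC hf s).le
  have hcard : (Finset.univ.erase t).card = 3 := by
    rw [Finset.card_erase_of_mem (Finset.mem_univ t)]; rfl
  rw [Finset.sum_add_distrib, ← Finset.mul_sum, Finset.sum_const, Finset.sum_const, hcard] at h3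
  simp only [smul_eq_mul] at h3
  omega

/-- Intersections of two switchable cycles are nearly balanced. -/
theorem ManyZeros.card_inter_lt (hbad : ManyZeros C q) (hC : IsCycleChain C)
    (hf : Admissible C f) {Q R : G.E → ZMod 2} (hQ : Switchable C f c Q)
    (hR : Switchable C f c R) (t : ZMod 2 × ZMod 2) :
    Finset.card {e | e ∈ C ∧ Q e ≠ 0 ∧ R e ≠ 0 ∧ f e = t} <
      q + Finset.card {e | e ∈ C ∧ Q e ≠ 0 ∧ R e ≠ 0 ∧ f e = t + c} := by
  have hR' : Switchable C (switch f c Q) c R :=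
    ⟨hR.1, fun e he h => by rw [symp_switch]; exact hR.2 e he h⟩
  have h1 := hbad.card_lt hC hf hR t
  have h2 := hbad.card_lt hC (hf.switch hQ) hR' (t + c)
  rw [add_add_cancel_char_two] at h2
  have split : ∀ (g : G.E → ZMod 2 × ZMod 2) (s : ZMod 2 × ZMod 2),
      Finset.card {e | e ∈ C ∧ R e ≠ 0 ∧ g e = s} =
        Finset.card {e | e ∈ C ∧ Q e ≠ 0 ∧ R e ≠ 0 ∧ g e = s} +
        Finset.card {e | e ∈ C ∧ Q e = 0 ∧ R e ≠ 0 ∧ g e = s} := fun g s => by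
    rw [← Finset.card_filter_add_card_filter_not (fun e => Q e ≠ 0),
      Finset.filter_filter, Finset.filter_filter]
    congr 2 <;> ext e <;> simp <;> tauto
  have hne : ∀ s, Finset.card {e | e ∈ C ∧ Q e ≠ 0 ∧ R e ≠ 0 ∧ switch f c Q e = s} =
      Finset.card {e | e ∈ C ∧ Q e ≠ 0 ∧ R e ≠ 0 ∧ f e = s + c} := fun s => by
    congr 1
    ext e
    simp only [Finset.mem_filter, Finset.mem_univ, true_and]
    refine and_congr_right fun _ => and_congr_right fun h => and_congr_right fun _ => ?_
    rw [switch_apply_of_ne h, add_eq_iff_eq_add]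
  have heq : ∀ s, Finset.card {e | e ∈ C ∧ Q e = 0 ∧ R e ≠ 0 ∧ switch f c Q e = s} =
      Finset.card {e | e ∈ C ∧ Q e = 0 ∧ R e ≠ 0 ∧ f e = s} := fun s => by
    congr 1
    ext e
    simp only [Finset.mem_filter, Finset.mem_univ, true_and]
    refine and_congr_right fun _ => and_congr_right fun h => and_congr_right fun _ => ?_
    rw [switch_apply_of_eq h]
  rw [split, split, hne, hne, heq, heq, add_add_cancel_char_two] at h2
  rw [split, split f (t + c)] at h1
  omega

end Switching

end Multigraph

namespace Multigraph

section CyclicEnumeration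

open scoped Classical

/-- The restriction of an edge function to `S`. -/
noncomputable def restrict {G : Multigraph} {A : Type*} [AddCommGroup A] (S : Set G.E)
    (f : G.E → A) (e : G.E) : A :=
  if e ∈ S then f e else 0

theorem restrict_add_restrict_compl {G : Multigraph} {A : Type*} [AddCommGroup A] (S : Set G.E)
    (f : G.E → A) : restrict S f + restrict Sᶜ f = f := by
  ext e
  by_cases h : e ∈ S <;> simp [restrict, h]

/-- A periodic enumeration of the vertices and edges of a circuit of length `N`. -/
structure CyclicEnum (G : Multigraph) (C : Set G.E) (N : ℕ) where
  vtx : ℤ → G.V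
  edge : ℤ → G.E
  two_le : 2 ≤ N
  ends_edge : ∀ k, G.ends (edge k) = s(vtx k, vtx (k + 1))
  vtx_eq_iff : ∀ i j, vtx i = vtx j ↔ (N : ℤ) ∣ i - j
  edge_eq_iff : ∀ i j, edge i = edge j ↔ (N : ℤ) ∣ i - j
  range_edge : Set.range edge = C

theorem eq_zero_or_eq_of_dvd {n : ℕ} {a : ℤ} (h : (n : ℤ) ∣ a) (h1 : -n < a) (h2 : a < 2 * n) :
    a = 0 ∨ a = n := by
  obtain ⟨t, rfl⟩ := h
  have ht1 : -1 < t := by nlinarith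
  have ht2 : t < 2 := by nlinarith
  obtain rfl | rfl : t = 0 ∨ t = 1 := by omega
  · simp
  · simp

theorem eq_zero_of_dvd {n : ℕ} {a : ℤ} (h : (n : ℤ) ∣ a) (h1 : -n < a) (h2 : a < n) : a = 0 := by
  rcases eq_zero_or_eq_of_dvd h h1 (by omega) with h | h <;> omega

namespace CyclicEnum

variable {G : Multigraph} {C : Set G.E} {N : ℕ} (γ : CyclicEnum G C N)

theorem not_dvd_one (γ : CyclicEnum G C N) : ¬ (N : ℤ) ∣ 1 := fun h => by
  have := γ.two_le
  have := eq_zero_of_dvd h (by omega) (by omega)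
  omega

theorem edge_mem (k : ℤ) : γ.edge k ∈ C :=
  γ.range_edge.le (Set.mem_range_self k)

theorem exists_shift (γ : CyclicEnum G C N) (s j : ℤ) :
    ∃ i, s ≤ i ∧ i < s + N ∧ (N : ℤ) ∣ i - j := by
  have hN : (0 : ℤ) < N := by have := γ.two_le; omega
  refine ⟨s + (j - s) % N, ?_, ?_, ?_⟩
  · have := Int.emod_nonneg (j - s) hN.ne'; omega
  · have := Int.emod_lt_of_pos (j - s) hN; omega
  · have := Int.dvd_self_sub_emod (x := j - s) (m := N)
    rwa [show s + (j - s) % N - j = -((j - s) - (j - s) % N) by ring, dvd_neg]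

theorem ncard_eq (γ : CyclicEnum G C N) : C.ncard = N := by
  have : C = γ.edge '' (Finset.Ico (0 : ℤ) N : Finset ℤ) := by
    ext e
    constructor
    · intro he
      rw [← γ.range_edge] at he
      obtain ⟨k, rfl⟩ := he
      obtain ⟨i, h0, h1, h2⟩ := γ.exists_shift 0 k
      exact ⟨i, by simp; omega, (γ.edge_eq_iff _ _).2 h2⟩
    · rintro ⟨k, _, rfl⟩
      exact γ.edge_mem k
  rw [this, Set.InjOn.ncard_image, Set.ncard_coe_finset]
  · simp
  · intro i hi j hj h
    simp only [Finset.coe_Ico, Set.mem_Ico] at hi hj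
    have := eq_zero_of_dvd ((γ.edge_eq_iff _ _).1 h) (by omega) (by omega)
    omega

section Parts

variable {A : Type*} [AddCommGroup A] [Module (ZMod 2) A]

/-- The sum of the values of `f` on the two edges of the circuit at `vtx k`. -/
def defect (f : G.E → A) (k : ℤ) : A := f (γ.edge (k - 1)) + f (γ.edge k)

theorem bd_restrict_vtx (f : G.E → A) (k : ℤ) : bd (restrict C f) (γ.vtx k) = γ.defect f k := by
  have hne : γ.edge (k - 1) ≠ γ.edge k := by
    rw [ne_eq, γ.edge_eq_iff, show k - 1 - k = -1 by ring, dvd_neg]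
    exact γ.not_dvd_one
  have h1 : inc (γ.vtx k) (γ.edge k) = 1 := by
    rw [inc_eq_of_ends (γ.ends_edge k), if_pos rfl, if_neg, add_zero]
    rw [γ.vtx_eq_iff, show k - (k + 1) = -1 by ring, dvd_neg]
    exact γ.not_dvd_one
  have h2 : inc (γ.vtx k) (γ.edge (k - 1)) = 1 := by
    rw [inc_eq_of_ends (γ.ends_edge (k - 1)), if_neg, if_pos (by simp), zero_add]
    rw [γ.vtx_eq_iff, show k - (k - 1) = 1 by ring]
    exact γ.not_dvd_one
  rw [bd, ← Finset.sum_subset (Finset.subset_univ {γ.edge (k - 1), γ.edge k}),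
    Finset.sum_pair hne, h1, h2, one_smul, one_smul, restrict, restrict, if_pos (γ.edge_mem _),
    if_pos (γ.edge_mem _), defect]
  intro e _ he
  by_cases heC : e ∈ C
  · rw [← γ.range_edge] at heC
    obtain ⟨j, rfl⟩ := heC
    simp only [Finset.mem_insert, Finset.mem_singleton, not_or] at he
    rw [inc_eq_of_ends (γ.ends_edge j), if_neg, if_neg, add_zero, zero_smul]
    · rw [γ.vtx_eq_iff]
      intro h
      apply he.1
      rwa [γ.edge_eq_iff, ← dvd_neg, show -(j - (k - 1)) = k - (j + 1) by ring]
    · rw [γ.vtx_eq_iff]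
      intro h
      apply he.2
      rwa [γ.edge_eq_iff, ← dvd_neg, neg_sub]
  · simp [restrict, heC]

theorem bd_restrict_of_notMem (f : G.E → A) {x : G.V} (hx : x ∉ Set.range γ.vtx) :
    bd (restrict C f) x = 0 := by
  refine Finset.sum_eq_zero fun e _ => ?_
  by_cases heC : e ∈ C
  · rw [← γ.range_edge] at heC
    obtain ⟨j, rfl⟩ := heC
    rw [inc_eq_of_ends (γ.ends_edge j), if_neg fun h => hx ⟨_, h.symm⟩,
      if_neg fun h => hx ⟨_, h.symm⟩, add_zero, zero_smul]
  · simp [restrict, heC]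

end Parts

theorem isCycleChain (γ : CyclicEnum G C N) : IsCycleChain C := by
  intro v
  change bd (restrict C fun _ => (1 : ZMod 2)) v = 0
  by_cases hv : v ∈ Set.range γ.vtx
  · obtain ⟨k, rfl⟩ := hv
    rw [γ.bd_restrict_vtx]
    exact CharTwo.add_self_eq_zero _
  · exact γ.bd_restrict_of_notMem _ hv

variable {f : G.E → ZMod 2 × ZMod 2} {c : ZMod 2 × ZMod 2}

theorem bd_restrict_compl_vtx (hf : Admissible C f) (k : ℤ) :
    bd (restrict Cᶜ f) (γ.vtx k) = γ.defect f k := by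
  have h := hf.1 (γ.vtx k)
  rwa [← restrict_add_restrict_compl C f, bd_add,
    γ.bd_restrict_vtx, add_comm, add_eq_iff_eq_add, zero_add] at h

theorem bd_restrict_compl_of_notMem (hf : Admissible C f) {x : G.V} (hx : x ∉ Set.range γ.vtx) :
    bd (restrict Cᶜ f) x = 0 := by
  have h := hf.1 x
  rwa [← restrict_add_restrict_compl C f, bd_add, γ.bd_restrict_of_notMem _ hx, zero_add] at h

/-- The vertices `vtx i` and `vtx j` are joined outside `C` by edges with values not in `{0, c}`. -/
def Linked (f : G.E → ZMod 2 × ZMod 2) (c : ZMod 2 × ZMod 2) (i j : ℤ) : Prop :=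
  ∃ P : G.E → ZMod 2, (∀ e, P e ≠ 0 → e ∉ C ∧ symp c (f e) ≠ 0) ∧
    ∀ x, bd P x = (if x = γ.vtx i then 1 else 0) + (if x = γ.vtx j then 1 else 0)

variable {γ} in
theorem Linked.congr_right {i j k : ℤ} (h : γ.Linked f c i j) (hjk : (N : ℤ) ∣ k - j) :
    γ.Linked f c i k := by
  unfold Linked
  rw [(γ.vtx_eq_iff k j).2 hjk]
  exact h

variable {γ} in
theorem Linked.symm {i j : ℤ} (h : γ.Linked f c i j) : γ.Linked f c j i := by
  obtain ⟨P, h1, h2⟩ := h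
  exact ⟨P, h1, fun x => by rw [h2, add_comm]⟩

theorem defect_congr {A : Type*} [AddCommGroup A] (f : G.E → A) {i j : ℤ} (h : (N : ℤ) ∣ i - j) :
    γ.defect f i = γ.defect f j := by
  rw [defect, defect, (γ.edge_eq_iff i j).2 h, (γ.edge_eq_iff (i - 1) (j - 1)).2]
  rwa [sub_sub_sub_cancel_right]

theorem exists_linked (hf : Admissible C f) {i : ℤ} (hi : symp c (γ.defect f i) ≠ 0) (s : ℤ) :
    ∃ j, s ≤ j ∧ j < s + N ∧ ¬ (N : ℤ) ∣ j - i ∧ symp c (γ.defect f j) ≠ 0 ∧ γ.Linked f c i j := by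
  set P : G.E → ZMod 2 := fun e => symp c (restrict Cᶜ f e)
  have hP : ∀ v, bd P v = symp c (bd (restrict Cᶜ f) v) := fun v => by
    have : ∀ s : Finset G.E, symp c (∑ e ∈ s, inc v e • restrict Cᶜ f e) =
        ∑ e ∈ s, inc v e • P e := fun s => by
      induction s using Finset.induction_on with
      | empty => simp [symp]
      | insert a s ha ih =>
        rw [Finset.sum_insert ha, Finset.sum_insert ha, symp_add, symp_smul, ih]; rfl
    exact (this _).symm
  obtain ⟨w, hwi, hw, hreach⟩ := exists_odd_reaches (P := P) (u := γ.vtx i)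
    (by rwa [hP, γ.bd_restrict_compl_vtx hf])
  rw [hP] at hw
  have hwr : w ∈ Set.range γ.vtx := by
    by_contra h
    rw [γ.bd_restrict_compl_of_notMem hf h] at hw
    simp [symp] at hw
  obtain ⟨j, rfl⟩ := hwr
  rw [γ.bd_restrict_compl_vtx hf] at hw
  obtain ⟨k, hk1, hk2, hk3⟩ := γ.exists_shift s j
  obtain ⟨R, hR, hbR⟩ := hreach.exists_bd_eq
  refine ⟨k, hk1, hk2, ?_, ?_, ?_⟩
  · rw [← γ.vtx_eq_iff, (γ.vtx_eq_iff k j).2 hk3]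
    exact hwi
  · rwa [γ.defect_congr f hk3]
  · refine Linked.congr_right ⟨R, fun e he => ?_, hbR⟩ hk3
    have := hR e he
    simp only [Set.mem_ofPred_eq, P, restrict] at this
    by_cases heC : e ∈ C
    · simp [heC, symp] at this
    · exact ⟨heC, by simpa [heC] using this⟩

/-- The chain of the edges with indices in `[i, j)`. -/
noncomputable def arc (i j : ℤ) (e : G.E) : ZMod 2 :=
  if ∃ k, i ≤ k ∧ k < j ∧ γ.edge k = e then 1 else 0

theorem arc_edge_ne_zero_iff {i j k : ℤ} :
    γ.arc i j (γ.edge k) ≠ 0 ↔ ∃ l, i ≤ l ∧ l < j ∧ (N : ℤ) ∣ l - k := by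
  simp [arc, γ.edge_eq_iff]

theorem arc_of_notMem {i j : ℤ} {e : G.E} (he : e ∉ C) : γ.arc i j e = 0 := by
  rw [arc, if_neg]
  rintro ⟨k, -, -, rfl⟩
  exact he (γ.edge_mem k)

theorem bd_arc {i j : ℤ} (hij : i ≤ j) (hj : j ≤ i + N) (x : G.V) :
    bd (γ.arc i j) x = (if x = γ.vtx i then 1 else 0) + (if x = γ.vtx j then 1 else 0) := by
  induction j, hij using Int.leInduction with
  | base =>
    rw [CharTwo.add_self_eq_zero, bd]
    refine Finset.sum_eq_zero fun e _ => ?_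
    rw [arc, if_neg, smul_zero]
    rintro ⟨k, h1, h2, -⟩
    omega
  | succ j hij ih =>
    have : γ.arc i (j + 1) = γ.arc i j + Pi.single (γ.edge j) 1 := by
      ext e
      by_cases he : e = γ.edge j
      · subst he
        have h0 : ¬ ∃ k, i ≤ k ∧ k < j ∧ γ.edge k = γ.edge j := by
          rintro ⟨k, h1, h2, h3⟩
          have := eq_zero_of_dvd ((γ.edge_eq_iff _ _).1 h3) (by omega) (by omega)
          omega
        have h1 : ∃ k, i ≤ k ∧ k < j + 1 ∧ γ.edge k = γ.edge j := ⟨j, hij, by omega, rfl⟩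
        simp only [Pi.add_apply, Pi.single_eq_same, arc, if_neg h0, if_pos h1, zero_add]
      · simp only [Pi.add_apply, Pi.single_eq_of_ne he, add_zero, arc]
        congr 1
        refine propext (exists_congr fun k => and_congr_right fun _ => ⟨?_, ?_⟩)
        · rintro ⟨h1, h2⟩
          refine ⟨lt_of_le_of_ne (by omega) ?_, h2⟩
          rintro rfl
          exact he h2.symm
        · rintro ⟨h1, h2⟩
          exact ⟨by omega, h2⟩
    rw [this, bd_add, ih (by omega), bd_single (γ.ends_edge j)]
    have := CharTwo.add_self_eq_zero (if x = γ.vtx j then 1 else 0 : ZMod 2)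
    simp only [smul_eq_mul, mul_one]
    linear_combination this

variable {γ} in
theorem Linked.exists_switchable {i j : ℤ} (h : γ.Linked f c i j) (hij : i ≤ j) (hj : j ≤ i + N) :
    ∃ Q, Switchable C f c Q ∧ ∀ k, Q (γ.edge k) = γ.arc i j (γ.edge k) := by
  obtain ⟨P, hP, hb⟩ := h
  have h0 : ∀ e ∈ C, P e = 0 := fun e he => by
    by_contra h
    exact (hP e h).1 he
  refine ⟨P + γ.arc i j, ⟨fun v => ?_, fun e he h => ?_⟩, fun k => ?_⟩
  · rw [bd_add, hb, γ.bd_arc hij hj, CharTwo.add_self_eq_zero]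
  · rw [Pi.add_apply, γ.arc_of_notMem he, add_zero] at h
    exact (hP e h).2
  · rw [Pi.add_apply, h0 _ (γ.edge_mem k), zero_add]

variable {γ} in
/-- Switching a link changes the defects at its ends only. -/
theorem Linked.exists_admissible {i j : ℤ} (hf : Admissible C f) (h : γ.Linked f c i j) :
    ∃ g, Admissible C g ∧ ∀ k, γ.defect g k = γ.defect f k +
      ((if (N : ℤ) ∣ k - i then 1 else 0) + (if (N : ℤ) ∣ k - j then 1 else 0) : ZMod 2) • c := by
  obtain ⟨j', h1, h2, h3⟩ := γ.exists_shift i j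
  obtain ⟨P, hP, hb⟩ := h.congr_right h3
  have h0 : ∀ e ∈ C, P e = 0 := fun e he => by
    by_contra h
    exact (hP e h).1 he
  have hs : Switchable C f c (P + γ.arc i j') := by
    refine ⟨fun v => ?_, fun e he h => ?_⟩
    · rw [bd_add, hb, γ.bd_arc h1 h2.le, CharTwo.add_self_eq_zero]
    · rw [Pi.add_apply, γ.arc_of_notMem he, add_zero] at h
      exact (hP e h).2
  refine ⟨_, hf.switch hs, fun k => ?_⟩
  have hr : restrict Cᶜ (switch f c (P + γ.arc i j')) = restrict Cᶜ f + fun e => P e • c := by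
    ext1 e
    by_cases he : e ∈ C
    · simp [restrict, he, h0 e he]
    · simp [restrict, he, switch, γ.arc_of_notMem he]
  rw [← γ.bd_restrict_compl_vtx (hf.switch hs), hr, bd_add, γ.bd_restrict_compl_vtx hf,
    bd_smul_const, hb, (γ.vtx_eq_iff j' j).2 h3]
  simp only [γ.vtx_eq_iff]

end CyclicEnum

end CyclicEnumeration

end Multigraph

namespace Multigraph

section Blocks

open scoped Classical

namespace CyclicEnum

variable {G : Multigraph} {C : Set G.E} {N : ℕ} (γ : CyclicEnum G C N)
  {q : ℕ} {f : G.E → ZMod 2 × ZMod 2} {c : ZMod 2 × ZMod 2}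

theorem eq_of_forall_defect_eq_zero {i j : ℤ} (h : ∀ k, i < k → k < j → γ.defect f k = 0) :
    ∀ k, i ≤ k → k < j → f (γ.edge k) = f (γ.edge i) := by
  intro k hik
  induction k, hik using Int.leInduction with
  | base => exact fun _ => rfl
  | succ k hik ih =>
    intro hkj
    rw [← ih (by omega)]
    have := h (k + 1) (by omega) hkj
    rwa [defect, add_sub_cancel_right, add_comm, add_eq_iff_eq_add, zero_add] at this

theorem sub_lt_of_isolated (hbad : ManyZeros C q) (hf : Admissible C f) (hc : c ≠ 0)
    {Q R : G.E → ZMod 2} (hQ : Switchable C f c Q) (hR : Switchable C f c R) {i j : ℤ}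
    (hij : i < j) (hj : j ≤ i + N)
    (hQR : ∀ k, i ≤ k → k < i + N → (Q (γ.edge k) ≠ 0 ∧ R (γ.edge k) ≠ 0 ↔ k < j))
    (hconst : ∀ k, i < k → k < j → γ.defect f k = 0) : j - i < q := by
  have h := hbad.card_inter_lt γ.isCycleChain hf hQ hR (f (γ.edge i))
  have hval := γ.eq_of_forall_defect_eq_zero hconst
  have key : ∀ e ∈ C, Q e ≠ 0 → R e ≠ 0 → ∃ k, i ≤ k ∧ k < j ∧ γ.edge k = e := by
    intro e he hq hr
    rw [← γ.range_edge] at he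
    obtain ⟨l, rfl⟩ := he
    obtain ⟨k, h1, h2, h3⟩ := γ.exists_shift i l
    rw [← γ.edge_eq_iff] at h3
    rw [← h3] at hq hr
    exact ⟨k, h1, (hQR k h1 h2).1 ⟨hq, hr⟩, h3⟩
  have e1 : Finset.card {e | e ∈ C ∧ Q e ≠ 0 ∧ R e ≠ 0 ∧ f e = f (γ.edge i) + c} = 0 := by
    rw [Finset.card_eq_zero, Finset.filter_eq_empty_iff]
    rintro e - ⟨he, hq, hr, hfe⟩
    obtain ⟨k, h1, h2, rfl⟩ := key e he hq hr
    rw [hval k h1 h2] at hfe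
    exact hc (by simpa using hfe)
  have e2 : ((Finset.Ico i j).image γ.edge).card ≤
      Finset.card {e | e ∈ C ∧ Q e ≠ 0 ∧ R e ≠ 0 ∧ f e = f (γ.edge i)} := by
    refine Finset.card_le_card fun e he => ?_
    obtain ⟨k, hk, rfl⟩ := Finset.mem_image.1 he
    rw [Finset.mem_Ico] at hk
    have := (hQR k hk.1 (by omega)).2 hk.2
    simp only [Finset.mem_filter, Finset.mem_univ, true_and]
    exact ⟨γ.edge_mem k, this.1, this.2, hval k hk.1 hk.2⟩
  rw [Finset.card_image_of_injOn, Int.card_Ico] at e2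
  · omega
  · intro k hk l hl h
    simp only [Finset.coe_Ico, Set.mem_Ico] at hk hl
    have := eq_zero_of_dvd ((γ.edge_eq_iff _ _).1 h) (by omega) (by omega)
    omega

/-- Segments of the circuit on which an admissible flow is constant have length at least `q`. -/
def LongSegments (q : ℕ) : Prop :=
  ∀ f, Admissible C f → ∀ i j : ℤ, i < j → j ≤ i + N → γ.defect f i ≠ 0 → γ.defect f j ≠ 0 →
    (∀ k, i < k → k < j → γ.defect f k = 0) → (q : ℤ) ≤ j - i

variable {γ}

/-- Links do not join two vertices of an interval on which no defect is equal to `c`. -/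
theorem LongSegments.not_linked (hlong : γ.LongSegments q) (hbad : ManyZeros C q)
    (hf : Admissible C f) (hc : c ≠ 0) {s : ℤ} {n : ℕ} (hn : n ≤ N)
    (hblock : ∀ k, s ≤ k → k < s + n → γ.defect f k ≠ c) (m : ℕ) :
    ∀ i j, s ≤ i → i < j → j < s + n → j - i = m → symp c (γ.defect f i) ≠ 0 →
      symp c (γ.defect f j) ≠ 0 → ¬ γ.Linked f c i j := by
  induction m using Nat.strong_induction_on with
  | _ m ih =>
  intro i j hsi hij hjn hm hi hj hlink
  have hne : ∀ {k}, symp c (γ.defect f k) ≠ 0 → γ.defect f k ≠ 0 := fun h =>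
    ((symp_ne_zero_iff hc _).1 h).1
  have hex : ∃ t : ℕ, symp c (γ.defect f (i + 1 + t)) ≠ 0 :=
    ⟨(j - i - 1).toNat, by rwa [show i + 1 + ((j - i - 1).toNat : ℤ) = j by omega]⟩
  obtain ⟨k, hik, hk, hkj, hzero⟩ : ∃ k, i < k ∧ symp c (γ.defect f k) ≠ 0 ∧ k ≤ j ∧
      ∀ l, i < l → l < k → γ.defect f l = 0 := by
    have hle : ∀ l, i < l → symp c (γ.defect f l) ≠ 0 → i + 1 + (Nat.find hex : ℤ) ≤ l := by
      intro l hl h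
      have := Nat.find_min' hex (m := (l - i - 1).toNat)
        (by rwa [show i + 1 + ((l - i - 1).toNat : ℤ) = l by omega])
      omega
    refine ⟨i + 1 + Nat.find hex, by omega, Nat.find_spec hex, hle j hij hj, fun l h1 h2 => ?_⟩
    by_contra h
    have := hle l h1 ((symp_ne_zero_iff hc _).2 ⟨h, ?_⟩)
    · omega
    · have := hle j hij hj
      exact hblock l (by omega) (by omega)
  have hq := hlong f hf i k hik (by omega) (hne hi) (hne hk) hzero
  obtain ⟨Q, hQ, hQe⟩ := hlink.exists_switchable hij.le (by omega)
  have harc : ∀ l, i ≤ l → l < i + N → (Q (γ.edge l) ≠ 0 ↔ l < j) := by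
    intro l h1 h2
    rw [hQe, γ.arc_edge_ne_zero_iff]
    constructor
    · rintro ⟨l', h3, h4, h5⟩
      have := eq_zero_of_dvd h5 (by omega) (by omega)
      omega
    · intro h
      exact ⟨l, h1, h, by simp⟩
  rcases hkj.eq_or_lt with rfl | hkj
  · have := γ.sub_lt_of_isolated hbad hf hc hQ hQ hij (by omega)
      (fun l h1 h2 => by rw [harc l h1 h2, and_self]) hzero
    omega
  obtain ⟨l, hl1, hl2, hlk, hl, hkl⟩ := γ.exists_linked hf hk i
  rcases lt_or_ge j l with hjl | hjl
  · obtain ⟨R, hR, hRe⟩ :=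
      (hkl.symm.congr_right (k := k + N) (by simp)).exists_switchable (by omega) (by omega)
    have := γ.sub_lt_of_isolated hbad hf hc hQ hR hik (by omega) (fun t h1 h2 => by
      rw [harc t h1 h2, hRe, γ.arc_edge_ne_zero_iff]
      constructor
      · rintro ⟨h3, t', h4, h5, h6⟩
        rcases eq_zero_or_eq_of_dvd h6 (by omega) (by omega) with h | h <;> omega
      · intro h
        exact ⟨by omega, t + N, by omega, by omega, by simp⟩) hzero
    omega
  · rcases lt_trichotomy l k with h | h | h
    · have hli : l = i := by
        by_contra hli
        rw [hzero l (by omega) h] at hl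
        simp [symp] at hl
      subst hli
      exact ih (k - l).toNat (by omega) l k hsi hik (by omega) (by omega) hi hk hkl.symm
    · subst h
      simp at hlk
    · exact ih (l - k).toNat (by omega) k l (by omega) h (by omega) (by omega) hk hl hkl

/-- All defects on an interval avoiding `c` can be turned into `0` or `a`. -/
theorem LongSegments.exists_monochromatic (hlong : γ.LongSegments q) (hbad : ManyZeros C q)
    (hc : c ≠ 0) {a : ZMod 2 × ZMod 2} (ha : symp c a ≠ 0) {s : ℤ} {n : ℕ} (hn : n ≤ N) (m : ℕ) :
    ∀ f, Admissible C f → (∀ k, s ≤ k → k < s + n → γ.defect f k ≠ c) →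
      ((Finset.Ico s (s + n)).filter
        fun k => ¬ (γ.defect f k = 0 ∨ γ.defect f k = a)).card = m →
      ∃ g, Admissible C g ∧ ∀ k, s ≤ k → k < s + n → γ.defect g k = 0 ∨ γ.defect g k = a := by
  induction m using Nat.strong_induction_on with
  | _ m ih =>
  intro f hf hblock hm
  by_cases hall : ∀ k, s ≤ k → k < s + n → γ.defect f k = 0 ∨ γ.defect f k = a
  · exact ⟨f, hf, hall⟩
  push Not at hall
  obtain ⟨k, hk1, hk2, hk0, hka⟩ := hall
  have hkT := (symp_ne_zero_iff hc _).2 ⟨hk0, hblock k hk1 hk2⟩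
  obtain ⟨l, hl1, hl2, hlk, hl, hlink⟩ := γ.exists_linked hf hkT s
  have hln : s + n ≤ l := by
    by_contra! hln
    rcases lt_trichotomy l k with h | h | h
    · exact hlong.not_linked hbad hf hc hn hblock _ l k hl1 h hk2
        (Int.toNat_of_nonneg (by omega)).symm hl hkT hlink.symm
    · subst h
      simp at hlk
    · exact hlong.not_linked hbad hf hc hn hblock _ k l hk1 h hln
        (Int.toNat_of_nonneg (by omega)).symm hkT hl hlink
  obtain ⟨g, hg, hgd⟩ := hlink.exists_admissible hf
  have hself : γ.defect g k = a := by
    rw [hgd, if_pos (by simp), if_neg (by rwa [← dvd_neg, neg_sub]), add_zero, one_smul]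
    revert hkT hka
    generalize γ.defect f k = x
    clear * - ha
    revert x a c
    decide
  have hother : ∀ t, s ≤ t → t < s + n → t ≠ k → γ.defect g t = γ.defect f t := by
    intro t h1 h2 h3
    rw [hgd, if_neg, if_neg, add_zero, zero_smul, add_zero]
    · intro h
      have := eq_zero_of_dvd h (by omega) (by omega)
      omega
    · intro h
      have := eq_zero_of_dvd h (by omega) (by omega)
      omega
  refine ih _ ?_ g hg ?_ rfl
  · rw [← hm]
    refine Finset.card_lt_card ⟨fun t ht => ?_, fun hsub => ?_⟩
    · simp only [Finset.mem_filter, Finset.mem_Ico] at ht ⊢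
      rcases eq_or_ne t k with rfl | h
      · exact absurd (Or.inr hself) ht.2
      · rwa [hother t ht.1.1 ht.1.2 h] at ht
    · have := hsub (x := k) (by simp [hk1, hk2, hk0, hka])
      simp [hself] at this
  · intro t h1 h2
    rcases eq_or_ne t k with rfl | h
    · rw [hself]
      exact ((symp_ne_zero_iff hc _).1 ha).2
    · rw [hother t h1 h2 h]
      exact hblock t h1 h2

/-- An interval avoiding a value can always be prolonged. -/
theorem LongSegments.exists_longer (hlong : γ.LongSegments q) (hbad : ManyZeros C q)
    (hc : c ≠ 0) {s : ℤ} {n : ℕ} (hn : n < N) (hf : Admissible C f)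
    (hblock : ∀ k, s ≤ k → k < s + n → γ.defect f k ≠ c) :
    ∃ g d, Admissible C g ∧ d ≠ 0 ∧ ∀ k, s ≤ k → k < s + (n + 1 : ℕ) → γ.defect g k ≠ d := by
  obtain ⟨a, ha⟩ : ∃ a, symp c a ≠ 0 := by
    clear * - hc
    revert c; decide
  have ha0 := (symp_ne_zero_iff hc a).1 ha
  obtain ⟨g, hg, hmono⟩ := hlong.exists_monochromatic hbad hc ha hn.le _ f hf hblock rfl
  by_cases hy : γ.defect g (s + n) = c
  swap
  · refine ⟨g, c, hg, hc, fun k h1 h2 => ?_⟩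
    rcases eq_or_ne k (s + n) with rfl | h
    · exact hy
    · rcases hmono k h1 (by push_cast at h2; omega) with h | h <;> rw [h]
      · exact hc.symm
      · exact ha0.2
  have hb : a + c ≠ 0 := add_ne_zero_of_symp_ne_zero ha
  have hyT : symp (a + c) (γ.defect g (s + n)) ≠ 0 := by
    rw [hy]
    clear * - ha
    revert a c; decide
  have hblock' : ∀ k, s ≤ k → k < s + (n + 1 : ℕ) → γ.defect g k ≠ a + c := by
    intro k h1 h2
    rcases eq_or_ne k (s + n) with rfl | h
    · rw [hy]
      exact fun h => ha0.1 (by simpa using h)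
    · rcases hmono k h1 (by push_cast at h2; omega) with h | h <;> rw [h]
      · exact hb.symm
      · exact fun h => hc (by simpa using h)
  obtain ⟨l, hl1, hl2, hlk, hl, hlink⟩ := γ.exists_linked hg hyT s
  have hln : s + n < l := by
    by_contra! hln
    rcases hln.eq_or_lt with rfl | h
    · simp at hlk
    · exact hlong.not_linked hbad hg hb (n := n + 1) hn hblock' _ l (s + n) hl1 h
        (by push_cast; omega) (Int.toNat_of_nonneg (by omega)).symm hl hyT hlink.symm
  obtain ⟨g', hg', hgd⟩ := hlink.exists_admissible hg
  refine ⟨g', c, hg', hc, fun k h1 h2 => ?_⟩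
  push_cast at h2
  rcases eq_or_ne k (s + n) with rfl | h
  · rw [hgd, if_pos (by simp), if_neg (by rwa [← dvd_neg, neg_sub]), add_zero, one_smul, hy]
    clear * - ha
    revert a c; decide
  · rw [hgd, if_neg, if_neg, add_zero, zero_smul, add_zero]
    · rcases hmono k h1 (by omega) with h | h <;> rw [h]
      · exact hc.symm
      · exact ha0.2
    · intro h
      have := eq_zero_of_dvd h (by omega) (by omega)
      omega
    · intro h
      have := eq_zero_of_dvd h (by omega) (by omega)
      omega

theorem LongSegments.not_manyZeros (hlong : γ.LongSegments q) (hq : q ≤ N)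
    (hf : Admissible C f) : ¬ ManyZeros C q := by
  intro hbad
  have hall : ∀ n ≤ N, ∃ g c, Admissible C g ∧ c ≠ 0 ∧
      ∀ k, 0 ≤ k → k < 0 + (n : ℤ) → γ.defect g k ≠ c := by
    intro n
    induction n with
    | zero => exact fun _ => ⟨f, (1, 0), hf, by decide, fun k h1 h2 => by simp at h2; omega⟩
    | succ n ih =>
      intro hn
      obtain ⟨g, c, hg, hc, hblock⟩ := ih (by omega)
      exact hlong.exists_longer hbad hc hn hg hblock
  obtain ⟨g, c, hg, hc, hblock⟩ := hall N le_rfl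
  have hzero : ∀ k, symp c (γ.defect g k) = 0 := by
    intro k
    by_contra hk
    obtain ⟨i, hi1, hi2, hik⟩ := γ.exists_shift 0 k
    rw [← γ.defect_congr g hik] at hk
    obtain ⟨l, hl1, hl2, hlk, hl, hlink⟩ := γ.exists_linked hg hk 0
    rcases lt_trichotomy l i with h | h | h
    · exact hlong.not_linked hbad hg hc le_rfl hblock _ l i hl1 h hi2
        (Int.toNat_of_nonneg (by omega)).symm hl hk hlink.symm
    · subst h
      simp at hlk
    · exact hlong.not_linked hbad hg hc le_rfl hblock _ i l hi1 h hl2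
        (Int.toNat_of_nonneg (by omega)).symm hk hl hlink
  have hzero' : ∀ k, γ.defect g k = 0 := by
    intro k
    obtain ⟨i, hi1, hi2, hik⟩ := γ.exists_shift 0 k
    rw [← γ.defect_congr g hik]
    by_contra h
    exact (symp_ne_zero_iff hc _).2 ⟨h, hblock i hi1 hi2⟩ (hzero i)
  have hcount : valueCount C g (g (γ.edge 0) + (1, 0)) = 0 := by
    rw [valueCount, Finset.card_eq_zero, Finset.filter_eq_empty_iff]
    rintro e - ⟨he, hge⟩
    rw [← γ.range_edge] at he
    obtain ⟨k, rfl⟩ := he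
    obtain ⟨i, hi1, hi2, hik⟩ := γ.exists_shift 0 k
    rw [← (γ.edge_eq_iff _ _).2 hik,
      γ.eq_of_forall_defect_eq_zero (i := 0) (j := i + 1) (fun k _ _ => hzero' k) i hi1 (by omega)]
      at hge
    exact absurd hge (by simp)
  have := hbad.lt_valueCount γ.isCycleChain hg (g (γ.edge 0) + (1, 0))
  rw [hcount, γ.ncard_eq] at this
  omega

end CyclicEnum

end Blocks

end Multigraph

namespace Multigraph

section Darts

open Function

theorem exists_involution {D α : Type*} (p : D → α)
    (h : ∀ d, ∃ d', d' ≠ d ∧ ∀ x, p x = p d ↔ x = d ∨ x = d') :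
    ∃ r : Equiv.Perm D, (∀ d, r (r d) = d) ∧ (∀ d, r d ≠ d) ∧
      ∀ d x, p x = p d ↔ x = d ∨ x = r d := by
  choose r hr hp using h
  have hinv : Involutive r := fun d => by
    have h1 : p (r d) = p d := (hp d _).2 (Or.inr rfl)
    have h2 : p (r (r d)) = p (r d) := (hp (r d) _).2 (Or.inr rfl)
    exact ((hp d _).1 (h2.trans h1)).resolve_right (hr _)
  exact ⟨hinv.toPerm, hinv, hr, hp⟩

/-- The product of two fixed-point-free involutions never acts on an orbit as one of them. -/
theorem zpow_mul_apply_ne {D : Type*} {r t : Equiv.Perm D} (hr : ∀ d, r (r d) = d)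
    (ht : ∀ d, t (t d) = d) (hr' : ∀ d, r d ≠ d) (ht' : ∀ d, t d ≠ d) (k : ℤ) (d : D) :
    ((t * r) ^ k) d ≠ r d := by
  have hconj : ∀ n : ℤ, r * (t * r) ^ n = (t * r) ^ (-n) * r := by
    have hr1 : r * r = 1 := Equiv.ext hr
    have ht1 : t * t = 1 := Equiv.ext ht
    have hri : r⁻¹ = r := inv_eq_of_mul_eq_one_left hr1
    have hti : t⁻¹ = t := inv_eq_of_mul_eq_one_left ht1
    have h1 : SemiconjBy r (t * r) (t * r)⁻¹ := by
      rw [SemiconjBy, mul_inv_rev, hri, hti, mul_assoc]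
    intro n
    rw [zpow_neg, ← inv_zpow]
    exact h1.zpow_right n
  intro h
  obtain ⟨m, rfl | rfl⟩ := Int.even_or_odd' k
  · apply hr' (((t * r) ^ m) d)
    rw [← Equiv.Perm.mul_apply, hconj, Equiv.Perm.mul_apply, ← h, ← Equiv.Perm.mul_apply,
      ← zpow_add]
    congr 2
    ring
  · have hcomm : t * r * (t * r) ^ m = (t * r) ^ (m + 1) := by rw [add_comm, zpow_one_add]
    apply ht' (r (((t * r) ^ m) d))
    rw [← Equiv.Perm.mul_apply, ← Equiv.Perm.mul_apply, ← Equiv.Perm.mul_apply,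
      hcomm, hconj, Equiv.Perm.mul_apply, ← h, ← Equiv.Perm.mul_apply, ← zpow_add]
    congr 2
    ring

variable {G : Multigraph} {C : Set G.E}

theorem IsCircuit.exists_pair (hC : G.IsCircuit C) (hloop : ∀ e ∈ C, ¬ (G.ends e).IsDiag)
    {v : G.V} {e : G.E} (he : e ∈ C) (hv : v ∈ G.ends e) :
    ∃ e', e' ≠ e ∧ ∀ x, x ∈ C ∧ v ∈ G.ends x ↔ x = e ∨ x = e' := by
  have hdeg := hC.2.1 v ⟨e, he, hv⟩
  have h0 : Nat.card {e : G.E // e ∈ C ∧ G.ends e = s(v, v)} = 0 := by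
    have : IsEmpty {e : G.E // e ∈ C ∧ G.ends e = s(v, v)} :=
      ⟨fun x => hloop _ x.2.1 (by rw [x.2.2]; simp)⟩
    exact Nat.card_of_isEmpty
  rw [degIn, h0, mul_zero, add_zero] at hdeg
  have hset : {x | x ∈ C ∧ v ∈ G.ends x}.ncard = 2 := by
    rw [← hdeg, ← Nat.card_coe_set_eq]
    refine congrArg (fun s : Set G.E => Nat.card s) (Set.ext fun x => ?_)
    exact and_congr_right fun hx => (and_iff_left (hloop x hx)).symm
  obtain ⟨a, b, hab, hs⟩ := Set.ncard_eq_two.1 hset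
  have hmem : ∀ x, x ∈ C ∧ v ∈ G.ends x ↔ x = a ∨ x = b := fun x => by
    simpa using Set.ext_iff.1 hs x
  rcases (hmem e).1 ⟨he, hv⟩ with rfl | rfl
  · exact ⟨b, hab.symm, hmem⟩
  · exact ⟨a, hab, fun x => (hmem x).trans or_comm⟩

theorem IsCircuit.exists_cyclicEnum (hC : G.IsCircuit C)
    (hloop : ∀ e ∈ C, ¬ (G.ends e).IsDiag) : ∃ N, Nonempty (CyclicEnum G C N) := by
  let D := {d : G.V × G.E // d.2 ∈ C ∧ d.1 ∈ G.ends d.2}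
  have hD : ∀ x y : D, x = y ↔ x.1.1 = y.1.1 ∧ x.1.2 = y.1.2 :=
    fun x y => Subtype.ext_iff.trans Prod.ext_iff
  obtain ⟨r, hr, hr', hsnd⟩ := exists_involution (fun d : D => d.1.2) (by
    rintro ⟨⟨v, e⟩, he, hv⟩
    have hne := hloop e he
    have hend := (Sym2.other_spec hv)
    rw [← hend, Sym2.mk_isDiag_iff] at hne
    refine ⟨⟨(Sym2.Mem.other hv, e), he, Sym2.other_mem hv⟩, fun h => hne ?_, ?_⟩
    · exact ((hD _ _).1 h).1.symm
    · rintro ⟨⟨w, e'⟩, he', hw⟩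
      rw [hD, hD]
      dsimp only at he' hw ⊢
      constructor
      · rintro rfl
        rw [← hend, Sym2.mem_iff] at hw
        simpa using hw
      · tauto)
  obtain ⟨t, ht, ht', hfst⟩ := exists_involution (fun d : D => d.1.1) (by
    rintro ⟨⟨v, e⟩, he, hv⟩
    obtain ⟨e', hne, hmem⟩ := hC.exists_pair hloop he hv
    have he' := (hmem e').2 (Or.inr rfl)
    refine ⟨⟨(v, e'), he'⟩, fun h => hne ?_, ?_⟩
    · exact ((hD _ _).1 h).2
    · rintro ⟨⟨w, x⟩, hx, hw⟩
      rw [hD, hD]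
      dsimp only at he' hw ⊢
      constructor
      · rintro rfl
        simpa using (hmem x).1 ⟨hx, hw⟩
      · tauto)
  obtain ⟨e₀, he₀⟩ := hC.1
  let d₀ : D := ⟨((G.ends e₀).out.1, e₀), he₀, Sym2.out_fst_mem _⟩
  let σ : Equiv.Perm D := t * r
  let d : ℤ → D := fun k => (σ ^ k) d₀
  have hd : ∀ k, d (k + 1) = t (r (d k)) := fun k => by
    change (σ ^ (k + 1)) d₀ = σ ((σ ^ k) d₀)
    rw [add_comm, zpow_one_add, Equiv.Perm.mul_apply]
  have hne : ∀ i j, d i ≠ r (d j) := fun i j h => by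
    apply zpow_mul_apply_ne hr ht hr' ht' (i - j) (d j)
    rw [← h]
    change (σ ^ (i - j)) ((σ ^ j) d₀) = (σ ^ i) d₀
    rw [← Equiv.Perm.mul_apply, ← zpow_add, sub_add_cancel]
  have htd : ∀ k, t (d k) = r (d (k - 1)) := fun k => by
    have := hd (k - 1)
    rw [sub_add_cancel] at this
    rw [this, ht]
  have hdeq : ∀ i j, d i = d j ↔ (minimalPeriod (σ • ·) d₀ : ℤ) ∣ i - j := fun i j => by
    rw [← MulAction.zpow_smul_eq_iff_minimalPeriod_dvd, sub_eq_neg_add, zpow_add, mul_smul,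
      zpow_neg, inv_smul_eq_iff]
    rfl
  have hvtx : ∀ i j, (d i).1.1 = (d j).1.1 ↔ d i = d j := fun i j => by
    rw [hfst (d j) (d i), htd]
    exact or_iff_left (hne _ _)
  have hedge : ∀ i j, (d i).1.2 = (d j).1.2 ↔ d i = d j := fun i j => by
    rw [hsnd (d j) (d i)]
    exact or_iff_left (hne _ _)
  have hrfst : ∀ k, (r (d k)).1.1 = (d (k + 1)).1.1 := fun k => by
    rw [hfst, hd, ht]
    exact Or.inr rfl
  have hrsnd : ∀ k, (r (d k)).1.2 = (d k).1.2 := fun k => by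
    rw [hsnd]
    exact Or.inr rfl
  have hvne : ∀ k, (d k).1.1 ≠ (d (k + 1)).1.1 := fun k h => by
    rw [← hrfst] at h
    exact hr' (d k) (Subtype.ext (Prod.ext h.symm (hrsnd k)))
  have hends : ∀ k, G.ends (d k).1.2 = s((d k).1.1, (d (k + 1)).1.1) := fun k => by
    have h1 := (d k).2.2
    have h2 := (r (d k)).2.2
    rw [hrsnd, hrfst] at h2
    exact ((Sym2.mem_and_mem_iff (hvne k)).1 ⟨h1, h2⟩)
  have hclosed : ∀ k e, e ∈ C → (d k).1.1 ∈ G.ends e → ∃ l, (d l).1.2 = e ∧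
      ∀ w ∈ G.ends e, ∃ m, (d m).1.1 = w := by
    intro k e he hk
    obtain ⟨l, hl⟩ : ∃ l, (d l).1.2 = e := by
      rcases (hfst (d k) ⟨((d k).1.1, e), he, hk⟩).1 rfl with h | h
      · exact ⟨k, by rw [← h]⟩
      · refine ⟨k - 1, ?_⟩
        rw [← hrsnd, ← htd, ← h]
    refine ⟨l, hl, fun w hw => ?_⟩
    rw [← hl, hends, Sym2.mem_iff] at hw
    rcases hw with rfl | rfl
    exacts [⟨_, rfl⟩, ⟨_, rfl⟩]
  have hall : ∀ w, G.Reaches C (d 0).1.1 w → ∃ m, (d m).1.1 = w := by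
    intro w hw
    induction hw with
    | refl => exact ⟨0, rfl⟩
    | tail _ h ih =>
      obtain ⟨m, hm⟩ := ih
      obtain ⟨e, he, hend⟩ := h
      obtain ⟨l, -, hl⟩ := hclosed m e he (by rw [hm, hend]; exact Sym2.mem_mk_left _ _)
      exact hl _ (by rw [hend]; exact Sym2.mem_mk_right _ _)
  refine ⟨minimalPeriod (σ • ·) d₀, ⟨fun k => (d k).1.1, fun k => (d k).1.2, ?_, hends,
    fun i j => (hvtx i j).trans (hdeq i j), fun i j => (hedge i j).trans (hdeq i j), ?_⟩⟩
  · have h0 : minimalPeriod (σ • ·) d₀ ≠ 0 := by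
      have hper := isOfFinOrder_of_finite σ
      rw [← Nat.pos_iff_ne_zero]
      refine minimalPeriod_pos_of_mem_periodicPts ⟨orderOf σ, hper.orderOf_pos, ?_⟩
      rw [IsPeriodicPt, IsFixedPt, smul_iterate_apply, pow_orderOf_eq_one, one_smul]
    have h1 : minimalPeriod (σ • ·) d₀ ≠ 1 := fun h => by
      have := (hdeq 0 1).2 (by rw [h]; simp)
      exact hvne 0 ((hvtx _ _).2 this)
    omega
  · ext e
    constructor
    · rintro ⟨k, rfl⟩
      exact (d k).2.1
    · intro he
      obtain ⟨m, hm⟩ := hall (G.ends e).out.1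
        (hC.2.2 _ _ ⟨_, (d 0).2⟩ ⟨e, he, Sym2.out_fst_mem _⟩)
      obtain ⟨l, hl, -⟩ := hclosed m e he (by rw [hm]; exact Sym2.out_fst_mem _)
      exact ⟨l, hl⟩

end Darts

end Multigraph

namespace Multigraph

section Threads

variable {G : Multigraph} {C : Set G.E} {N n q : ℕ}

theorem Walk.IsPath.not_isDiag {W : G.Walk n} (hW : W.IsPath G) (i : Fin n) :
    ¬ (G.ends (W.edge i)).IsDiag := by
  rw [W.compat, Sym2.mk_isDiag_iff]
  intro h
  have := congrArg Fin.val (hW.1 h)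
  simp at this

theorem Walk.IsPath.le_ncard {W : G.Walk n} (hW : W.IsPath G) {S : Set G.E}
    (h : ∀ i, W.edge i ∈ S) : n ≤ S.ncard := by
  have : (Set.range W.edge).ncard = n := by
    rw [← Nat.card_coe_set_eq, Nat.card_range_of_injective hW.2, Nat.card_fin]
  rw [← this]
  exact Set.ncard_le_ncard (Set.range_subset_iff.2 h)

namespace CyclicEnum

variable (γ : CyclicEnum G C N)

theorem not_isDiag (k : ℤ) : ¬ (G.ends (γ.edge k)).IsDiag := by
  rw [γ.ends_edge, Sym2.mk_isDiag_iff, γ.vtx_eq_iff, show k - (k + 1) = -1 by ring, dvd_neg]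
  exact γ.not_dvd_one

theorem mem_ends (k : ℤ) : γ.vtx k ∈ G.ends (γ.edge k) := by
  rw [γ.ends_edge]
  exact Sym2.mem_mk_left _ _

theorem mem_ends_sub_one (k : ℤ) : γ.vtx k ∈ G.ends (γ.edge (k - 1)) := by
  rw [γ.ends_edge, sub_add_cancel]
  exact Sym2.mem_mk_right _ _

theorem eq_or_eq_of_degree_eq_two {k : ℤ} (hk : G.degree (γ.vtx k) = 2) {e : G.E}
    (he : γ.vtx k ∈ G.ends e) (he' : ¬ (G.ends e).IsDiag) :
    e = γ.edge (k - 1) ∨ e = γ.edge k := by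
  by_contra! hne
  have hne' : γ.edge (k - 1) ≠ γ.edge k := by
    rw [ne_eq, γ.edge_eq_iff, show k - 1 - k = -1 by ring, dvd_neg]
    exact γ.not_dvd_one
  have hle : ({e, γ.edge (k - 1), γ.edge k} : Set G.E).ncard ≤
      {x | γ.vtx k ∈ G.ends x ∧ ¬ (G.ends x).IsDiag}.ncard := by
    refine Set.ncard_le_ncard ?_
    rintro x (rfl | rfl | rfl)
    exacts [⟨he, he'⟩, ⟨γ.mem_ends_sub_one k, γ.not_isDiag _⟩, ⟨γ.mem_ends k, γ.not_isDiag _⟩]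
  rw [Set.ncard_eq_three.2 ⟨e, _, _, hne.1, hne.2, hne', rfl⟩, ← Nat.card_coe_set_eq] at hle
  have hle' : Nat.card {x // γ.vtx k ∈ G.ends x ∧ ¬ (G.ends x).IsDiag} ≤ 2 := by
    rw [← hk, degree]
    exact Nat.le_add_right _ _
  exact absurd (hle.trans hle') (by decide)

theorem exists_vtx_eq {e : G.E} (he : e ∈ C) {v : G.V} (hv : v ∈ G.ends e) :
    ∃ k, γ.vtx k = v ∧ (e = γ.edge (k - 1) ∨ e = γ.edge k) := by
  rw [← γ.range_edge] at he
  obtain ⟨k, rfl⟩ := he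
  rw [γ.ends_edge, Sym2.mem_iff] at hv
  rcases hv with rfl | rfl
  · exact ⟨k, rfl, Or.inr rfl⟩
  · exact ⟨k + 1, rfl, Or.inl (by rw [add_sub_cancel_right])⟩

/-- A set of edges of the circuit that is not separated at vertices of degree two contains all
threads that it meets. -/
theorem le_ncard_of_closed {S : Set G.E} (hSC : S ⊆ C)
    (hS : ∀ k, G.degree (γ.vtx k) = 2 → (γ.edge (k - 1) ∈ S ↔ γ.edge k ∈ S))
    {W : G.Walk n} (hW : G.IsDeg2Path W) {e : G.E} (he : e ∈ Set.range W.edge) (heS : e ∈ S) :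
    n ≤ S.ncard := by
  have hstep : ∀ {v e e'}, G.degree v = 2 → e ∈ S → v ∈ G.ends e → v ∈ G.ends e' →
      ¬ (G.ends e').IsDiag → e' ∈ S := by
    intro v e e' hv he hve hve' hdiag
    obtain ⟨k, rfl, hk⟩ := γ.exists_vtx_eq (hSC he) hve
    have hmem : γ.edge (k - 1) ∈ S ∧ γ.edge k ∈ S := by
      have := hS k hv
      rcases hk with rfl | rfl <;> tauto
    rcases γ.eq_or_eq_of_degree_eq_two hv hve' hdiag with rfl | rfl
    exacts [hmem.1, hmem.2]
  have hnext : ∀ (i : ℕ) (hi : i + 1 < n),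
      W.edge ⟨i, by omega⟩ ∈ S ↔ W.edge ⟨i + 1, hi⟩ ∈ S := by
    intro i hi
    have hdeg := hW.2.2 ⟨i + 1, by omega⟩ (by simp) hi
    have h1 : W.vtx ⟨i + 1, by omega⟩ ∈ G.ends (W.edge ⟨i, by omega⟩) := by
      rw [W.compat]
      exact Sym2.mem_mk_right _ _
    have h2 : W.vtx ⟨i + 1, by omega⟩ ∈ G.ends (W.edge ⟨i + 1, hi⟩) := by
      rw [W.compat]
      exact Sym2.mem_mk_left _ _
    exact ⟨fun h => hstep hdeg h h1 h2 (hW.2.1.not_isDiag _),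
      fun h => hstep hdeg h h2 h1 (hW.2.1.not_isDiag _)⟩
  have hzero : ∀ (i : ℕ) (hi : i < n), W.edge ⟨i, hi⟩ ∈ S ↔ W.edge ⟨0, by omega⟩ ∈ S := by
    intro i
    induction i with
    | zero => exact fun _ => Iff.rfl
    | succ i ih => exact fun hi => (hnext i hi).symm.trans (ih (by omega))
  obtain ⟨m, rfl⟩ := he
  have h0 := (hzero m m.2).1 heS
  exact hW.2.1.le_ncard fun i => (hzero i i.2).2 h0

theorem defect_eq_zero_of_degree_eq_two {f : G.E → ZMod 2 × ZMod 2} (hf : Admissible C f) {k : ℤ}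
    (hk : G.degree (γ.vtx k) = 2) : γ.defect f k = 0 := by
  rw [← γ.bd_restrict_compl_vtx hf]
  refine Finset.sum_eq_zero fun e _ => ?_
  by_cases he : γ.vtx k ∈ G.ends e ∧ ¬ (G.ends e).IsDiag
  · have heC : e ∈ C := by
      rcases γ.eq_or_eq_of_degree_eq_two hk he.1 he.2 with rfl | rfl <;> exact γ.edge_mem _
    simp [restrict, heC]
  · rw [inc, if_neg he, zero_smul]

theorem le_of_threads (γ : CyclicEnum G C N) (hthread : ∀ e ∈ C, ∃ n : ℕ, q ≤ n ∧ ∃ W : G.Walk n,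
    G.IsDeg2Path W ∧ e ∈ Set.range W.edge) : q ≤ N := by
  obtain ⟨n, hn, W, hW, he⟩ := hthread _ (γ.edge_mem 0)
  rw [← γ.ncard_eq]
  refine hn.trans (γ.le_ncard_of_closed subset_rfl (fun k _ => ?_) hW he (γ.edge_mem 0))
  exact iff_of_true (γ.edge_mem _) (γ.edge_mem _)

theorem longSegments_of_threads (hthread : ∀ e ∈ C, ∃ n : ℕ, q ≤ n ∧ ∃ W : G.Walk n,
    G.IsDeg2Path W ∧ e ∈ Set.range W.edge) : γ.LongSegments q := by
  intro f hf i j hij hj hi hj' _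
  obtain ⟨n, hn, W, hW, he⟩ := hthread _ (γ.edge_mem i)
  set S : Set G.E := γ.edge '' (Finset.Ico i j : Finset ℤ)
  have hmem : ∀ k, γ.edge k ∈ S ↔ ∃ l, i ≤ l ∧ l < j ∧ (N : ℤ) ∣ l - k := fun k => by
    simp [S, γ.edge_eq_iff, and_assoc]
  have hcard : S.ncard ≤ (j - i).toNat := by
    rw [← Int.card_Ico, ← Set.ncard_coe_finset]
    exact Set.ncard_image_le (Finset.finite_toSet _)
  have hle : n ≤ S.ncard := by
    refine γ.le_ncard_of_closed ?_ (fun k hk => ?_) hW he ((hmem i).2 ⟨i, le_rfl, hij, by simp⟩)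
    · rintro e ⟨k, -, rfl⟩
      exact γ.edge_mem k
    · obtain ⟨k', h1, h2, h3⟩ := γ.exists_shift i k
      have hd := γ.defect_eq_zero_of_degree_eq_two hf hk
      rw [← γ.defect_congr f h3] at hd
      rw [← (γ.edge_eq_iff k' k).2 h3,
        ← (γ.edge_eq_iff (k' - 1) (k - 1)).2 (by rwa [sub_sub_sub_cancel_right]), hmem, hmem]
      have hki : k' ≠ i := fun h => hi (h ▸ hd)
      have hkj : k' ≠ j := fun h => hj' (h ▸ hd)
      rcases lt_or_ge k' j with h | h
      · exact iff_of_true ⟨k' - 1, by omega, by omega, by simp⟩ ⟨k', h1, h, by simp⟩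
      · refine iff_of_false ?_ ?_
        all_goals
          rintro ⟨l, h4, h5, h6⟩
          have := eq_zero_of_dvd h6 (by omega) (by omega)
          omega
  omega

end CyclicEnum

end Threads

end Multigraph

namespace Multigraph

section Contraction

open scoped Classical

variable {G : Multigraph} {C : Set G.E} {N : ℕ} {A : Type*} [AddCommGroup A] [Module (ZMod 2) A]

/-- The vertex of the contracted graph containing `v`. -/
def contractMk (C : Set G.E) (v : G.V) : (G.contract C).V := Quot.mk _ v

theorem inc_contract (K : (G.contract C).V) (e : (G.contract C).E) :
    inc K e = ∑ v : G.V with contractMk C v = K, inc v e.1 := by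
  obtain ⟨a, b, hab⟩ : ∃ a b, G.ends e.1 = s(a, b) := ⟨_, _, (Quot.out_eq (G.ends e.1)).symm⟩
  have hends : (G.contract C).ends e = s(contractMk C a, contractMk C b) := by
    change (G.ends e.1).map (Quot.mk _) = _
    rw [hab]
    rfl
  rw [inc_eq_of_ends hends]
  simp only [inc_eq_of_ends hab, Finset.sum_add_distrib, Finset.sum_ite_eq', Finset.mem_filter,
    Finset.mem_univ, true_and]
  exact congrArg₂ _ (if_congr eq_comm rfl rfl) (if_congr eq_comm rfl rfl)

/-- The extension by zero of an edge function of the contracted graph. -/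
noncomputable def extend (f : (G.contract C).E → A) (e : G.E) : A :=
  if h : e ∉ C then f ⟨e, h⟩ else 0

theorem sum_bd_extend (f : (G.contract C).E → A) (K : (G.contract C).V) :
    ∑ v : G.V with contractMk C v = K, bd (extend f) v = bd f K := by
  have h1 : ∀ e : (G.contract C).E, (∑ v : G.V with contractMk C v = K, inc v e.1) • f e =
      (∑ v : G.V with contractMk C v = K, inc v e.1) • extend f e.1 := fun e => by
    rw [extend, dif_pos e.2]
    rfl
  simp only [bd, inc_contract, h1]
  rw [Finset.sum_comm]
  simp only [← Finset.sum_smul]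
  symm
  refine Finset.sum_of_injOn (fun e : (G.contract C).E => e.1)
    Subtype.val_injective.injOn (fun _ _ => Finset.mem_univ _) (fun e _ he => ?_) fun _ _ => rfl
  have : ¬ e ∉ C := fun h => he ⟨⟨e, h⟩, Finset.mem_coe.2 (Finset.mem_univ _), rfl⟩
  rw [extend, dif_neg this, smul_zero]

namespace CyclicEnum

variable (γ : CyclicEnum G C N)

theorem mk_vtx (k : ℤ) : contractMk C (γ.vtx k) = contractMk C (γ.vtx 0) := by
  have hstep : ∀ k, contractMk C (γ.vtx k) = contractMk C (γ.vtx (k + 1)) :=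
    fun k => Quot.sound ⟨γ.edge k, γ.edge_mem k, γ.ends_edge k⟩
  induction k using Int.induction_on with
  | zero => rfl
  | succ k ih => rw [← hstep, ih]
  | pred k ih => rw [hstep, sub_add_cancel, ih]

theorem mk_eq_mk_iff (v w : G.V) : contractMk C v = contractMk C w ↔
    v = w ∨ v ∈ Set.range γ.vtx ∧ w ∈ Set.range γ.vtx := by
  constructor
  · intro h
    let F : G.V → Option G.V := fun v => if v ∈ Set.range γ.vtx then none else some v
    have hF : ∀ u w, (∃ e ∈ C, G.ends e = s(u, w)) → F u = F w := by
      rintro u w ⟨e, he, hend⟩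
      obtain ⟨k, hk, -⟩ := γ.exists_vtx_eq he (hend ▸ Sym2.mem_mk_left u w)
      obtain ⟨l, hl, -⟩ := γ.exists_vtx_eq he (hend ▸ Sym2.mem_mk_right u w)
      simp only [F]
      rw [if_pos ⟨k, hk⟩, if_pos ⟨l, hl⟩]
    have hvw : F v = F w := congrArg (Quot.lift F hF) h
    simp only [F] at hvw
    split_ifs at hvw with h1 h2 h2
    · exact Or.inr ⟨h1, h2⟩
    · exact Or.inl (Option.some_injective _ hvw)
  · rintro (rfl | ⟨⟨k, rfl⟩, ⟨l, rfl⟩⟩)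
    · rfl
    · rw [γ.mk_vtx, γ.mk_vtx l]

theorem exists_admissible_of_contract (γ : CyclicEnum G C N)
    {f : (G.contract C).E → ZMod 2 × ZMod 2}
    (hf : (G.contract C).IsFlow f) (hf0 : ∀ e, f e ≠ 0) : ∃ g, Admissible C g := by
  rw [isFlow_iff_bd] at hf
  have hN := γ.two_le
  have hout : ∀ v ∉ Set.range γ.vtx, bd (extend f) v = 0 := fun v hv => by
    have := sum_bd_extend f (contractMk C v)
    rw [hf, Finset.sum_eq_single v] at this
    · exact this
    · intro w hw hne
      rcases (γ.mk_eq_mk_iff w v).1 (Finset.mem_filter.1 hw).2 with h | h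
      exacts [absurd h hne, absurd h.2 hv]
    · simp
  have hinj : Set.InjOn (fun k : ℕ => γ.vtx k) (Finset.range N) := by
    intro i hi j hj h
    simp only [Finset.coe_range, Set.mem_Iio] at hi hj
    have := eq_zero_of_dvd ((γ.vtx_eq_iff _ _).1 h) (by omega) (by omega)
    omega
  have hrange : ∀ k, ∃ l < N, γ.vtx (l : ℕ) = γ.vtx k := fun k => by
    obtain ⟨l, h1, h2, h3⟩ := γ.exists_shift 0 k
    refine ⟨l.toNat, by omega, ?_⟩
    rwa [Int.toNat_of_nonneg h1, γ.vtx_eq_iff]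
  have hin : ∑ k ∈ Finset.range N, bd (extend f) (γ.vtx (k : ℕ)) = 0 := by
    rw [← hf (contractMk C (γ.vtx 0)), ← sum_bd_extend]
    refine Finset.sum_of_injOn (fun k : ℕ => γ.vtx k) hinj ?_ ?_ fun _ _ => rfl
    · intro k _
      simpa using γ.mk_vtx k
    · intro v hv hv'
      refine hout v ?_
      rintro ⟨k, rfl⟩
      obtain ⟨l, h1, h2⟩ := hrange k
      exact hv' ⟨l, by simpa using h1, h2⟩
  refine ⟨extend f + fun e =>
      ∑ k ∈ Finset.range N, γ.arc 0 (k : ℕ) e • bd (extend f) (γ.vtx (k : ℕ)),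
    fun v => ?_, fun e he => ?_⟩
  · rw [bd_add, bd_sum]
    have hterm : ∀ k ∈ Finset.range N,
        bd (fun e => γ.arc 0 (k : ℕ) e • bd (extend f) (γ.vtx (k : ℕ))) v =
          ((if v = γ.vtx 0 then 1 else 0) : ZMod 2) • bd (extend f) (γ.vtx (k : ℕ)) +
            if v = γ.vtx (k : ℕ) then bd (extend f) v else 0 := fun k hk => by
      rw [Finset.mem_range] at hk
      rw [bd_smul_const, γ.bd_arc (by omega) (by omega), add_smul]
      congr 1
      split_ifs with h
      · rw [one_smul, h]
      · rw [zero_smul]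
    rw [Finset.sum_congr rfl hterm, Finset.sum_add_distrib, ← Finset.smul_sum, hin, smul_zero,
      zero_add]
    by_cases hv : v ∈ Set.range γ.vtx
    · obtain ⟨k, rfl⟩ := hv
      obtain ⟨l, h1, h2⟩ := hrange k
      rw [Finset.sum_eq_single l, if_pos h2.symm]
      · exact CharTwo.add_self_eq_zero _
      · intro m hm hml
        rw [if_neg]
        intro h
        exact hml (hinj hm (by simpa using h1) (h.symm.trans h2.symm))
      · simp [h1]
    · rw [hout v hv, zero_add]
      simp
  · have h0 : ∀ k ∈ Finset.range N, γ.arc 0 (k : ℕ) e • bd (extend f) (γ.vtx (k : ℕ)) = 0 :=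
      fun k _ => by rw [γ.arc_of_notMem he, zero_smul]
    rw [Pi.add_apply, Finset.sum_congr rfl h0, Finset.sum_const_zero, add_zero, extend, dif_pos he]
    exact hf0 _

end CyclicEnum

end Contraction

end Multigraph

open Multigraph in
/-- If `C` is a circuit of `G` each of whose edges lies on a
thread of `G` of length at least `q`, and `G/C` admits a nowhere-zero
`ℤ₂×ℤ₂`-flow, then `G` admits a `ℤ₂×ℤ₂`-flow `f` with `E(G) − E(C) ⊆ supp f`
and `|E_{f=(0,0)}(C)| ≤ (|E(C)| − q)/4`. -/
theorem circuit_contract_flow_thread (G : Multigraph) (C : Set G.E) (q : ℕ)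
    (hC : G.IsCircuit C)
    (hthread : ∀ e ∈ C, ∃ n : ℕ, q ≤ n ∧ ∃ W : G.Walk n,
      G.IsThread W ∧ e ∈ Set.range W.edge)
    (hnz : ∃ f' : (G.contract C).E → ZMod 2 × ZMod 2,
      (G.contract C).IsFlow f' ∧ ∀ e, f' e ≠ (0, 0)) :
    ∃ f : G.E → ZMod 2 × ZMod 2, G.IsFlow f ∧
      (∀ e : G.E, e ∉ C → f e ≠ (0, 0)) ∧
      ({e ∈ C | f e = (0, 0)}.ncard : ℝ) ≤ (1 / 4) * ((C.ncard : ℝ) - (q : ℝ)) := by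
  have hpath : ∀ e ∈ C, ∃ n : ℕ, q ≤ n ∧ ∃ W : G.Walk n,
      G.IsDeg2Path W ∧ e ∈ Set.range W.edge := fun e he => by
    obtain ⟨n, hn, W, hW, heW⟩ := hthread e he
    exact ⟨n, hn, W, hW.1, heW⟩
  obtain ⟨N, ⟨γ⟩⟩ := hC.exists_cyclicEnum fun e he => by
    obtain ⟨n, -, W, hW, i, rfl⟩ := hpath e he
    exact hW.2.1.not_isDiag i
  obtain ⟨f', hf', hf0⟩ := hnz
  obtain ⟨f₀, hf₀⟩ := γ.exists_admissible_of_contract hf' hf0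
  by_contra! hcon
  refine (γ.longSegments_of_threads hpath).not_manyZeros (γ.le_of_threads hpath) hf₀ ?_
  intro f hf
  have h := hcon f ((isFlow_iff_bd f).2 hf.1) hf.2
  have hcount : {e ∈ C | f e = (0, 0)}.ncard = valueCount C f 0 := by
    rw [valueCount, ← Set.ncard_coe_finset]
    congr 1
    ext e
    simp [Prod.ext_iff]
  rw [hcount] at h
  have h' : (C.ncard : ℝ) < 4 * valueCount C f 0 + q := by linarith
  exact_mod_cast h'
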